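/- Let A₁, …, Aₙ be m×m positive definite complex matrices and let w = (w₁, …, wₙ) be a weight (wᵢ > 0, Σᵢ wᵢ = 1). Then the function F(X) = Σᵢ wᵢ δ²(X, Aᵢ) on the set of positive definite matrices attains a minimum at exactly one positive definite matrix X; i.e., the weighted least squares mean Λ(w; A₁, …, Aₙ) exists and is unique. -/

import Mathlib

/-!
The cone of positive definite matrices with the distance `δ` is a complete metric space of
nonpositive curvature: it satisfies the semiparallelogram law of Bruhat and Tits. Averaging the law
over the `Aᵢ` makes the objective strongly midpoint convex, so two points at which it is within `ε`
of its infimum are at distance `O(√ε)`. Hence minimizing sequences are Cauchy and all of them have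
the same limit, the unique minimizer.

Both the triangle inequality and the semiparallelogram law compare a triangle, after a congruence
moving one vertex to the identity, with the Euclidean triangle formed by the logarithms. They follow
from `‖log P - log Q‖₂ ≤ δ(P, Q)`, the exponential metric increasing property. To prove it without
differentiating the logarithm, consider `J(P, Q) = Tr(P⁻¹Q) + Tr(Q⁻¹P) - 2m`, which is invariant
under congruence. Summing the scalar inequality `t² ≤ 2 cosh t - 2` over the differences of the
eigenvalues of `log P` and `log Q`, weighted by the squared overlaps of their eigenvectors, gives
`‖log P - log Q‖₂² ≤ J(P, Q)`; conversely `J(P, Q) ≤ δ² exp(δ²/2)` with `δ = δ(P, Q)`. Cutting the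
geodesic from `P` to `Q` into `N` equal pieces and letting `N → ∞` removes the exponential factor.
The same bounds give completeness: the logarithms of a `δ`-Cauchy sequence converge, and `δ² ≤ J`
with `J` continuous turns this into convergence for `δ`.
-/

open Matrix
open scoped ComplexOrder

noncomputable def matFun {m : ℕ} (f : ℝ → ℝ) (A : Matrix (Fin m) (Fin m) ℂ) :
    Matrix (Fin m) (Fin m) ℂ :=
  if hA : A.IsHermitian then
    (hA.eigenvectorUnitary : Matrix (Fin m) (Fin m) ℂ) *
      Matrix.diagonal (fun i => (f (hA.eigenvalues i) : ℂ)) *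
      (star (hA.eigenvectorUnitary : Matrix (Fin m) (Fin m) ℂ))
  else 0

/-- The unique positive definite square root of a positive definite matrix
(realized via the spectral decomposition). -/
noncomputable def msqrt {m : ℕ} (A : Matrix (Fin m) (Fin m) ℂ) : Matrix (Fin m) (Fin m) ℂ :=
  matFun Real.sqrt A

/-- The logarithm of a positive definite matrix: the unique Hermitian `L` with `exp L = A`. -/
noncomputable def mlog {m : ℕ} (A : Matrix (Fin m) (Fin m) ℂ) : Matrix (Fin m) (Fin m) ℂ :=
  matFun Real.log A

/-- The real power `A ^ t` of a positive definite matrix, via the spectral decomposition. -/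
noncomputable def mpow {m : ℕ} (A : Matrix (Fin m) (Fin m) ℂ) (t : ℝ) : Matrix (Fin m) (Fin m) ℂ :=
  matFun (fun x => x ^ t) A

/-- The matrix geometric mean `A # B`. -/
noncomputable def gmean {m : ℕ} (A B : Matrix (Fin m) (Fin m) ℂ) : Matrix (Fin m) (Fin m) ℂ :=
  msqrt A * msqrt ((msqrt A)⁻¹ * B * (msqrt A)⁻¹) * msqrt A

/-- The weighted geometric mean `A #_t B`. -/
noncomputable def wgmean {m : ℕ} (A B : Matrix (Fin m) (Fin m) ℂ) (t : ℝ) :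
    Matrix (Fin m) (Fin m) ℂ :=
  msqrt A * mpow ((msqrt A)⁻¹ * B * (msqrt A)⁻¹) t * msqrt A

/-- The Frobenius (Hilbert–Schmidt) norm `‖X‖₂ = (Tr(X*X))^{1/2}`. -/
noncomputable def fnorm {m : ℕ} (X : Matrix (Fin m) (Fin m) ℂ) : ℝ :=
  Real.sqrt ((Xᴴ * X).trace.re)

/-- The Riemannian metric `δ(A,B) = ‖log(A^{-1/2} B A^{-1/2})‖₂`. -/
noncomputable def rdist {m : ℕ} (A B : Matrix (Fin m) (Fin m) ℂ) : ℝ :=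
  fnorm (mlog ((msqrt A)⁻¹ * B * (msqrt A)⁻¹))

/-- The Loewner order: `A ≤ B` iff `B - A` is positive semidefinite. -/
def Loewner {m : ℕ} (A B : Matrix (Fin m) (Fin m) ℂ) : Prop :=
  (B - A).PosSemidef

section StrongMidpointConvexity

open Filter Topology

variable {X : Type*}

/-- Midpoint convexity of `F` with modulus `c`, on a space without a chosen midpoint map: the value
at some `z`, playing the role of the midpoint, undercuts the mean by `c * dist x y ^ 2`. -/
def StronglyMidpointConvex [Dist X] (c : ℝ) (F : X → ℝ) : Prop :=
  ∀ x y, ∃ z, F z ≤ (F x + F y) / 2 - c * dist x y ^ 2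

/-- The semiparallelogram law of Bruhat and Tits: every squared distance function is strongly
midpoint convex, with a midpoint depending only on the two end points. A complete metric space
satisfying it is a Hadamard space. -/
def SemiparallelogramLaw (X : Type*) [Dist X] : Prop :=
  ∀ x y : X, ∃ z, ∀ a, dist z a ^ 2 ≤ (dist x a ^ 2 + dist y a ^ 2) / 2 - dist x y ^ 2 / 4

lemma StronglyMidpointConvex.mul_dist_sq_le [Dist X] {c : ℝ} {F : X → ℝ}
    (hF : StronglyMidpointConvex c F) (hbdd : BddBelow (Set.range F)) (x y : X) :
    c * dist x y ^ 2 ≤ (F x + F y) / 2 - ⨅ z, F z := by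
  obtain ⟨z, hz⟩ := hF x y
  linarith [ciInf_le hbdd z]

lemma StronglyMidpointConvex.cauchy_comap_nhds_iInf [PseudoMetricSpace X] [Nonempty X] {c : ℝ}
    {F : X → ℝ} (hF : StronglyMidpointConvex c F) (hc : 0 < c) (hbdd : BddBelow (Set.range F)) :
    Cauchy (comap F (𝓝 (⨅ z, F z))) := by
  refine Metric.cauchy_iff.2 ⟨comap_neBot_iff.2 fun t ht => ?_, fun ε hε => ?_⟩
  · obtain ⟨_, hxt, x, rfl⟩ :=
      mem_closure_iff_nhds.1 (csInf_mem_closure (Set.range_nonempty F) hbdd) t ht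
    exact ⟨x, hxt⟩
  · refine ⟨_, preimage_mem_comap (Iio_mem_nhds (lt_add_of_pos_right _
      (mul_pos hc (pow_pos hε 2)))), fun x hx y hy => lt_of_pow_lt_pow_left₀ 2 hε.le ?_⟩
    simp only [Set.mem_preimage, Set.mem_Iio] at hx hy
    exact lt_of_mul_lt_mul_left (by linarith [hF.mul_dist_sq_le hbdd x y]) hc.le

theorem StronglyMidpointConvex.existsUnique_forall_le [MetricSpace X] [CompleteSpace X]
    [Nonempty X] {c : ℝ} {F : X → ℝ} (hF : StronglyMidpointConvex c F) (hc : 0 < c)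
    (hlsc : LowerSemicontinuous F) (hbdd : BddBelow (Set.range F)) :
    ∃! x, ∀ y, F x ≤ F y := by
  have hcauchy := hF.cauchy_comap_nhds_iInf hc hbdd
  have := hcauchy.1
  obtain ⟨x, hx⟩ := CompleteSpace.complete hcauchy
  have hmin : F x ≤ ⨅ z, F z := le_of_forall_gt_imp_ge_of_dense fun r hr =>
    (hlsc.isClosed_preimage r).mem_of_tendsto (tendsto_id'.2 hx)
      (preimage_mem_comap (Iic_mem_nhds hr))
  refine ⟨x, fun y => hmin.trans (ciInf_le hbdd y), fun y hy => dist_le_zero.1 ?_⟩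
  have hsq := hF.mul_dist_sq_le hbdd y x
  have : c * dist y x ^ 2 ≤ 0 := by linarith [le_ciInf hy]
  exact (pow_eq_zero_iff two_ne_zero).1
    (le_antisymm (nonpos_of_mul_nonpos_right this hc) (sq_nonneg _)) |>.le

variable {ι : Type*} [Fintype ι]

lemma SemiparallelogramLaw.stronglyMidpointConvex_sum_sq_dist [Dist X]
    (hX : SemiparallelogramLaw X) (a : ι → X) {w : ι → ℝ} (hw : ∀ i, 0 ≤ w i) :
    StronglyMidpointConvex ((∑ i, w i) / 4) fun x => ∑ i, w i * dist x (a i) ^ 2 := by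
  intro x y
  obtain ⟨z, hz⟩ := hX x y
  refine ⟨z, (Finset.sum_le_sum fun i _ =>
    mul_le_mul_of_nonneg_left (hz (a i)) (hw i)).trans_eq ?_⟩
  rw [← Finset.sum_add_distrib, Finset.sum_div, Finset.sum_div, Finset.sum_mul,
    ← Finset.sum_sub_distrib]
  exact Finset.sum_congr rfl fun i _ => by ring

theorem SemiparallelogramLaw.existsUnique_forall_sum_sq_dist_le [MetricSpace X] [CompleteSpace X]
    (hX : SemiparallelogramLaw X) (a : ι → X) {w : ι → ℝ} (hw : ∀ i, 0 ≤ w i)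
    (hw_pos : 0 < ∑ i, w i) :
    ∃! x, ∀ y, ∑ i, w i * dist x (a i) ^ 2 ≤ ∑ i, w i * dist y (a i) ^ 2 := by
  have : Nonempty X := (Finset.nonempty_of_sum_ne_zero hw_pos.ne').nonempty.map a
  have hcont : Continuous fun x => ∑ i, w i * dist x (a i) ^ 2 := by fun_prop
  exact (hX.stronglyMidpointConvex_sum_sq_dist a hw).existsUnique_forall_le (by positivity)
    hcont.lowerSemicontinuous
    ⟨0, Set.forall_mem_range.2 fun x =>
      Finset.sum_nonneg fun i _ => mul_nonneg (hw i) (sq_nonneg _)⟩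

end StrongMidpointConvexity

section RealCurves

open Filter Topology

lemma dist_le_abs_sub_mul_of_continuousAt {E : Type*} [PseudoMetricSpace E] {γ : ℝ → E} {g : ℝ → ℝ}
    (hg : ContinuousAt g 0) (hγ : ∀ s t, dist (γ s) (γ t) ≤ |t - s| * g (t - s)) (a b : ℝ) :
    dist (γ a) (γ b) ≤ |b - a| * g 0 := by
  have hstep : Tendsto (fun N : ℕ => (b - a) / (N + 1)) atTop (𝓝 0) := by
    simpa [div_eq_mul_inv] using
      (tendsto_one_div_add_atTop_nhds_zero_nat (𝕜 := ℝ)).const_mul (b - a)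
  refine ge_of_tendsto' ((hg.tendsto.comp hstep).const_mul |b - a|) fun N => ?_
  set h : ℝ := (b - a) / (N + 1)
  have hN : ((N : ℝ) + 1) * h = b - a := mul_div_cancel₀ _ (by positivity)
  calc dist (γ a) (γ b) = dist (γ (a + (0 : ℕ) * h)) (γ (a + (N + 1 : ℕ) * h)) := by
        push_cast
        rw [hN, zero_mul, add_zero, add_sub_cancel]
    _ ≤ ∑ k ∈ Finset.range (N + 1), dist (γ (a + k * h)) (γ (a + (k + 1 : ℕ) * h)) :=
        dist_le_range_sum_dist (fun k : ℕ => γ (a + k * h)) (N + 1)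
    _ ≤ ∑ _k ∈ Finset.range (N + 1), |h| * g h := by
        refine Finset.sum_le_sum fun k _ => (hγ _ _).trans_eq ?_
        have : a + (k + 1 : ℕ) * h - (a + k * h) = h := by push_cast; ring
        rw [this]
    _ = |b - a| * g h := by
        rw [Finset.sum_const, Finset.card_range, nsmul_eq_mul, ← hN, abs_mul,
          abs_of_nonneg (by positivity : (0 : ℝ) ≤ N + 1)]
        push_cast
        ring

end RealCurves

section ScalarBounds

lemma sq_le_two_mul_cosh_sub_two (x : ℝ) : x ^ 2 ≤ 2 * Real.cosh x - 2 := by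
  have hcosh : Real.cosh x = 1 + 2 * Real.sinh (x / 2) ^ 2 := by
    have h := Real.cosh_two_mul (x / 2)
    rw [mul_div_cancel₀ x two_ne_zero, Real.cosh_sq'] at h
    linarith
  have hsinh : (x / 2) ^ 2 ≤ Real.sinh (x / 2) ^ 2 := by
    rw [sq_le_sq, Real.abs_sinh]
    exact Real.self_le_sinh_iff.2 (abs_nonneg _)
  linarith

lemma two_mul_cosh_sub_two_le (x : ℝ) : 2 * Real.cosh x - 2 ≤ x ^ 2 * Real.exp (x ^ 2 / 2) := by
  have hexp : (1 - x ^ 2 / 2) * Real.exp (x ^ 2 / 2) ≤ 1 := by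
    calc _ ≤ Real.exp (-(x ^ 2 / 2)) * Real.exp (x ^ 2 / 2) :=
          mul_le_mul_of_nonneg_right (Real.one_sub_le_exp_neg _) (Real.exp_pos _).le
      _ = 1 := by rw [← Real.exp_add, neg_add_cancel, Real.exp_zero]
  linarith [Real.cosh_le_exp_half_sq x]

end ScalarBounds

section HermitianTrace

variable {n 𝕜 : Type*} [Fintype n] [DecidableEq n] [RCLike 𝕜] {A B : Matrix n n 𝕜}

lemma trace_cfc (hA : A.IsHermitian) (f : ℝ → ℝ) :
    (cfc f A).trace = ((∑ i, f (hA.eigenvalues i) : ℝ) : 𝕜) := by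
  rw [hA.cfc_eq, Matrix.IsHermitian.cfc, Unitary.conjStarAlgAut_apply, Matrix.trace_mul_cycle,
    Unitary.coe_star_mul_self, one_mul, Matrix.trace_diagonal, RCLike.ofReal_sum]
  rfl

lemma trace_cfc_mul_cfc (hA : A.IsHermitian) (hB : B.IsHermitian) (f g : ℝ → ℝ) :
    (cfc f A * cfc g B).trace = ((∑ i, ∑ j, f (hA.eigenvalues i) * g (hB.eigenvalues j) *
      ‖((hA.eigenvectorUnitary : Matrix n n 𝕜)ᴴ * hB.eigenvectorUnitary) i j‖ ^ 2 : ℝ) : 𝕜) := by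
  set W := (hA.eigenvectorUnitary : Matrix n n 𝕜)ᴴ * hB.eigenvectorUnitary with hW
  have hcycle : (cfc f A * cfc g B).trace =
      ((diagonal (RCLike.ofReal ∘ f ∘ hA.eigenvalues) * W) *
        (diagonal (RCLike.ofReal ∘ g ∘ hB.eigenvalues) * Wᴴ)).trace := by
    rw [hA.cfc_eq, hB.cfc_eq, Matrix.IsHermitian.cfc, Matrix.IsHermitian.cfc,
      Unitary.conjStarAlgAut_apply, Unitary.conjStarAlgAut_apply, mul_assoc _ (diagonal _),
      mul_assoc _ (diagonal _), mul_assoc, Matrix.trace_mul_comm, hW, conjTranspose_mul,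
      conjTranspose_conjTranspose]
    simp only [mul_assoc, star_eq_conjTranspose]
  rw [hcycle]
  simp only [Matrix.trace, Matrix.diag, Matrix.mul_apply (M := _ * _), diagonal_mul,
    conjTranspose_apply, RCLike.ofReal_sum]
  refine Finset.sum_congr rfl fun i _ => Finset.sum_congr rfl fun j _ => ?_
  rw [mul_mul_mul_comm, ← starRingEnd_apply, RCLike.mul_conj]
  simp

lemma klein_inequality {κ : Type*} [Fintype κ] (hA : A.IsHermitian) (hB : B.IsHermitian)
    {f g : κ → ℝ → ℝ}
    (hfg : ∀ x ∈ spectrum ℝ A, ∀ y ∈ spectrum ℝ B, 0 ≤ ∑ k, f k x * g k y) :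
    0 ≤ RCLike.re (∑ k, cfc (f k) A * cfc (g k) B).trace := by
  simp only [Matrix.trace_sum, trace_cfc_mul_cfc hA hB, ← RCLike.ofReal_sum, RCLike.ofReal_re]
  rw [Finset.sum_comm]
  refine Finset.sum_nonneg fun i _ => ?_
  rw [Finset.sum_comm]
  refine Finset.sum_nonneg fun j _ => ?_
  rw [← Finset.sum_mul]
  exact mul_nonneg (hfg _ (hA.eigenvalues_mem_spectrum_real i) _
    (hB.eigenvalues_mem_spectrum_real j)) (sq_nonneg _)

end HermitianTrace

section Frobenius

variable {n : Type*}

/-- The identification of matrices with a Euclidean space by listing their entries. It transports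
the Frobenius norm and inner product without putting a norm on matrices. -/
noncomputable def frobeniusVec : Matrix n n ℂ ≃ₗ[ℂ] EuclideanSpace ℂ (n × n) where
  toFun X := WithLp.toLp 2 X.vec
  invFun v := Matrix.of fun i j => v (j, i)
  map_add' _ _ := rfl
  map_smul' _ _ := rfl
  left_inv _ := rfl
  right_inv _ := rfl

lemma frobeniusVec_real_smul (r : ℝ) (X : Matrix n n ℂ) :
    frobeniusVec (r • X) = r • frobeniusVec X :=
  rfl

variable [Fintype n]

lemma inner_frobeniusVec (X Y : Matrix n n ℂ) :
    inner ℂ (frobeniusVec X) (frobeniusVec Y) = (Xᴴ * Y).trace := by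
  rw [← star_vec_dotProduct_vec, dotProduct_comm]
  rfl

lemma norm_frobeniusVec_sq (X : Matrix n n ℂ) : ‖frobeniusVec X‖ ^ 2 = (Xᴴ * X).trace.re := by
  rw [← inner_frobeniusVec, ← inner_self_eq_norm_sq (𝕜 := ℂ)]
  rfl

lemma fnorm_eq_norm_frobeniusVec {m : ℕ} (X : Matrix (Fin m) (Fin m) ℂ) :
    fnorm X = ‖frobeniusVec X‖ := by
  rw [fnorm, ← norm_frobeniusVec_sq, Real.sqrt_sq (norm_nonneg _)]

end Frobenius

section HermitianExp

-- Kept local: no later statement depends on a choice of norm or order on matrices.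
open scoped Matrix.Norms.L2Operator MatrixOrder

variable {n : Type*} [Fintype n] [DecidableEq n] {A : Matrix n n ℂ}

lemma cfc_exp_eq_exp (hA : A.IsHermitian) : cfc Real.exp A = NormedSpace.exp A :=
  CFC.real_exp_eq_normedSpace_exp hA

lemma cfc_exp_neg_eq_exp_neg (hA : A.IsHermitian) :
    cfc (fun x : ℝ => Real.exp (-x)) A = NormedSpace.exp (-A) := by
  rw [← cfc_exp_eq_exp hA.neg, cfc_comp_neg Real.exp A]

lemma cfc_log_exp (hA : A.IsHermitian) : cfc Real.log (NormedSpace.exp A) = A :=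
  CFC.log_exp A hA

lemma isHermitian_cfc_log (A : Matrix n n ℂ) : (cfc Real.log A).IsHermitian :=
  cfc_predicate Real.log A

lemma exp_cfc_log (hA : A.PosDef) : NormedSpace.exp (cfc Real.log A) = A :=
  CFC.exp_log A hA.isStrictlyPositive

lemma posDef_exp (hA : A.IsHermitian) : (NormedSpace.exp A).PosDef := by
  rw [← cfc_exp_eq_exp hA, ← Matrix.isStrictlyPositive_iff_posDef]
  exact (cfc_isStrictlyPositive_iff Real.exp A (Real.continuous_exp.continuousOn) hA).2
    fun x _ => Real.exp_pos x

lemma continuous_matrix_exp : Continuous (NormedSpace.exp : Matrix n n ℂ → Matrix n n ℂ) :=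
  letI : NormedAlgebra ℚ (Matrix n n ℂ) := NormedAlgebra.restrictScalars ℚ ℝ _
  NormedSpace.exp_continuous

lemma exists_isUnit_mul_conjTranspose_eq (hA : A.PosDef) : ∃ C, IsUnit C ∧ C * Cᴴ = A := by
  obtain ⟨C, hC, hCA⟩ :=
    CStarAlgebra.isStrictlyPositive_iff_eq_mul_star_self.1 hA.isStrictlyPositive
  exact ⟨C, hC, hCA.symm⟩

lemma cfc_sqrt_mul_self (hA : A.PosSemidef) : cfc Real.sqrt A * cfc Real.sqrt A = A := by
  rw [← cfc_mul Real.sqrt Real.sqrt A]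
  exact (cfc_congr fun x hx => Real.mul_self_sqrt
    (spectrum_nonneg_of_nonneg hA.nonneg hx)).trans (cfc_id' ℝ A hA.isHermitian.isSelfAdjoint)

end HermitianExp

section Jeffreys

variable {n : Type*} [Fintype n] {H K : Matrix n n ℂ}

lemma sq_dist_frobeniusVec (hH : H.IsHermitian) (hK : K.IsHermitian) :
    dist (frobeniusVec H) (frobeniusVec K) ^ 2 =
      (H * H).trace.re - 2 * (H * K).trace.re + (K * K).trace.re := by
  rw [dist_eq_norm, ← map_sub, norm_frobeniusVec_sq, conjTranspose_sub, hH.eq, hK.eq]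
  simp only [sub_mul, mul_sub, Matrix.trace_sub, Matrix.trace_mul_comm K H, Complex.sub_re]
  ring

variable [DecidableEq n]

/-- The symmetrised Kullback–Leibler divergence (up to a constant factor) of the centred complex
Gaussians with covariance matrices `P` and `Q`. It agrees with the squared Riemannian distance to
second order at the diagonal and, unlike it, is a rational function of the entries. -/
noncomputable def jeffreysDiv (P Q : Matrix n n ℂ) : ℝ :=
  (P⁻¹ * Q).trace.re + (Q⁻¹ * P).trace.re - 2 * Fintype.card n

lemma jeffreysDiv_congr {B P Q : Matrix n n ℂ} (hB : IsUnit B) :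
    jeffreysDiv (B * P * Bᴴ) (B * Q * Bᴴ) = jeffreysDiv P Q := by
  have hdet : IsUnit B.det := (Matrix.isUnit_iff_isUnit_det _).1 hB
  have hdet' : IsUnit Bᴴ.det := (Matrix.isUnit_iff_isUnit_det _).1 hB.star
  have htrace (P Q : Matrix n n ℂ) :
      ((B * P * Bᴴ)⁻¹ * (B * Q * Bᴴ)).trace = (P⁻¹ * Q).trace := by
    rw [Matrix.mul_inv_rev, Matrix.mul_inv_rev, Matrix.trace_mul_comm]
    simp only [mul_assoc]
    rw [Matrix.mul_nonsing_inv_cancel_left _ _ hdet', Matrix.trace_mul_comm]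
    simp only [mul_assoc]
    rw [Matrix.nonsing_inv_mul _ hdet, mul_one, Matrix.trace_mul_comm]
  rw [jeffreysDiv, jeffreysDiv, htrace, htrace]

lemma sq_dist_frobeniusVec_le_jeffreysDiv (hH : H.IsHermitian) (hK : K.IsHermitian) :
    dist (frobeniusVec H) (frobeniusVec K) ^ 2 ≤
      jeffreysDiv (NormedSpace.exp H) (NormedSpace.exp K) := by
  -- `t² ≤ 2 cosh t - 2` at `t = y - x`, as a sum of products of a function of `x` and one of `y`
  have hscalar (x y : ℝ) : 0 ≤ Real.exp (-x) * Real.exp y + Real.exp x * Real.exp (-y)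
      + 1 * (-2) + x ^ 2 * (-1) + x * (2 * y) + 1 * -y ^ 2 := by
    have := sq_le_two_mul_cosh_sub_two (y - x)
    rw [Real.cosh_eq, show y - x = -x + y by ring, Real.exp_add,
      show -(-x + y) = x + -y by ring, Real.exp_add] at this
    linarith
  have hklein := klein_inequality hH hK
    (f := ![fun x => Real.exp (-x), Real.exp, fun _ => 1, fun x => x ^ 2, fun x => x, fun _ => 1])
    (g := ![Real.exp, fun y => Real.exp (-y), fun _ => -2, fun _ => -1, fun y => 2 * y,
      fun y => -y ^ 2])
    fun x _ y _ => by simpa [Fin.sum_univ_six] using hscalar x y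
  rw [sq_dist_frobeniusVec hH hK, jeffreysDiv, ← Matrix.exp_neg, ← Matrix.exp_neg,
    Matrix.trace_mul_comm (NormedSpace.exp (-K))]
  simp only [Fin.sum_univ_six, Fin.isValue, cons_val, cfc_exp_neg_eq_exp_neg hH,
    cfc_exp_neg_eq_exp_neg hK, cfc_exp_eq_exp hH, cfc_exp_eq_exp hK,
    cfc_const _ H hH.isSelfAdjoint, cfc_const _ K hK.isSelfAdjoint,
    cfc_pow_id H 2 hH.isSelfAdjoint, cfc_pow_id K 2 hK.isSelfAdjoint,
    cfc_id' ℝ H hH.isSelfAdjoint, cfc_const_mul_id (2 : ℝ) K hK.isSelfAdjoint, cfc_neg,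
    pow_two H, pow_two K, Algebra.algebraMap_eq_smul_one, one_smul, neg_smul, mul_neg, one_mul,
    mul_one, mul_smul_comm, Matrix.trace_add, Matrix.trace_neg, Matrix.trace_smul,
    Matrix.trace_one, RCLike.re_to_complex, Complex.add_re, Complex.neg_re, Complex.smul_re,
    Complex.natCast_re, smul_eq_mul] at hklein
  linarith

lemma continuous_jeffreysDiv_exp_left (K : Matrix n n ℂ) :
    Continuous fun H : Matrix n n ℂ => jeffreysDiv (NormedSpace.exp H) (NormedSpace.exp K) := by
  have hexp := continuous_matrix_exp (n := n)
  simp only [jeffreysDiv, ← Matrix.exp_neg]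
  fun_prop

lemma jeffreysDiv_self {P : Matrix n n ℂ} (hP : IsUnit P) : jeffreysDiv P P = 0 := by
  rw [jeffreysDiv, Matrix.nonsing_inv_mul _ ((Matrix.isUnit_iff_isUnit_det _).1 hP),
    Matrix.trace_one, Complex.natCast_re]
  ring

lemma sq_norm_frobeniusVec_eq_sum (hH : H.IsHermitian) :
    ‖frobeniusVec H‖ ^ 2 = ∑ i, hH.eigenvalues i ^ 2 := by
  have hsq : cfc (fun x : ℝ => x ^ 2) H = H * H := by rw [cfc_pow_id H 2 hH.isSelfAdjoint, sq]
  rw [norm_frobeniusVec_sq, hH.eq, ← hsq, trace_cfc hH]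
  exact Complex.ofReal_re _

lemma jeffreysDiv_one_exp_eq_sum (hH : H.IsHermitian) :
    jeffreysDiv 1 (NormedSpace.exp H) = ∑ i, (2 * Real.cosh (hH.eigenvalues i) - 2) := by
  rw [jeffreysDiv, inv_one, one_mul, mul_one, ← Matrix.exp_neg, ← cfc_exp_eq_exp hH,
    ← cfc_exp_neg_eq_exp_neg hH, trace_cfc hH, trace_cfc hH]
  simp only [Complex.coe_algebraMap, Complex.ofReal_re, Real.cosh_eq, mul_div_cancel₀,
    Finset.sum_sub_distrib, Finset.sum_add_distrib, Finset.sum_const, Finset.card_univ,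
    nsmul_eq_mul, ne_eq, OfNat.ofNat_ne_zero, not_false_eq_true]
  ring

lemma jeffreysDiv_one_exp_le (hH : H.IsHermitian) :
    jeffreysDiv 1 (NormedSpace.exp H) ≤
      ‖frobeniusVec H‖ ^ 2 * Real.exp (‖frobeniusVec H‖ ^ 2 / 2) := by
  rw [jeffreysDiv_one_exp_eq_sum hH, sq_norm_frobeniusVec_eq_sum hH, Finset.sum_mul]
  refine Finset.sum_le_sum fun i _ => (two_mul_cosh_sub_two_le _).trans ?_
  gcongr
  exact Finset.single_le_sum (fun j _ => sq_nonneg (hH.eigenvalues j)) (Finset.mem_univ i)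

end Jeffreys

section ExpAt

variable {n : Type*} [Fintype n] [DecidableEq n] {C H Q U : Matrix n n ℂ}

/-- The Riemannian exponential map at the base point `C * Cᴴ`, read in the frame `C`: for Hermitian
`H`, the curve `t ↦ expAt C (t • H)` is the geodesic through `C * Cᴴ` with velocity
`C * H * Cᴴ`. -/
noncomputable def expAt (C H : Matrix n n ℂ) : Matrix n n ℂ :=
  C * NormedSpace.exp H * Cᴴ

lemma expAt_zero (C : Matrix n n ℂ) : expAt C 0 = C * Cᴴ := by
  rw [expAt, NormedSpace.exp_zero, mul_one]

lemma expAt_mul (B C H : Matrix n n ℂ) : expAt (B * C) H = B * expAt C H * Bᴴ := by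
  simp only [expAt, conjTranspose_mul, mul_assoc]

lemma posDef_expAt (hC : IsUnit C) (hH : H.IsHermitian) : (expAt C H).PosDef :=
  (Matrix.IsUnit.posDef_star_right_conjugate_iff hC).2 (posDef_exp hH)

lemma expAt_of_mem_unitaryGroup (hU : U ∈ Matrix.unitaryGroup n ℂ) (H : Matrix n n ℂ) :
    expAt U H = NormedSpace.exp (U * H * Uᴴ) := by
  have hinv : U⁻¹ = Uᴴ := Matrix.inv_eq_right_inv (Matrix.mem_unitaryGroup_iff.1 hU)
  rw [expAt, ← hinv, Matrix.exp_conj U H (Unitary.isUnit_coe (U := ⟨U, hU⟩))]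

lemma exp_smul_mul_exp_smul (H : Matrix n n ℂ) (s t : ℝ) :
    NormedSpace.exp (s • H) * NormedSpace.exp (t • H) = NormedSpace.exp ((s + t) • H) := by
  rw [add_smul, Matrix.exp_add_of_commute _ _ (((Commute.refl H).smul_left s).smul_right t)]

lemma expAt_mul_exp_smul (C : Matrix n n ℂ) (hH : H.IsHermitian) (s t : ℝ) :
    expAt (C * NormedSpace.exp (s • H)) (t • H) = expAt C ((2 * s + t) • H) := by
  have hs : (NormedSpace.exp (s • H))ᴴ = NormedSpace.exp (s • H) :=
    (Matrix.IsHermitian.exp (hH.smul (IsSelfAdjoint.all s))).eq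
  rw [expAt_mul, expAt, expAt, hs, exp_smul_mul_exp_smul, exp_smul_mul_exp_smul]
  ring_nf

lemma exists_expAt_eq (hC : IsUnit C) (hQ : Q.PosDef) :
    ∃ H : Matrix n n ℂ, H.IsHermitian ∧ expAt C H = Q := by
  have hdet : IsUnit C.det := (Matrix.isUnit_iff_isUnit_det _).1 hC
  have hR : (C⁻¹ * Q * C⁻¹ᴴ).PosDef :=
    (Matrix.IsUnit.posDef_star_right_conjugate_iff (Matrix.isUnit_nonsing_inv_iff.2 hC)).2 hQ
  refine ⟨cfc Real.log (C⁻¹ * Q * C⁻¹ᴴ), isHermitian_cfc_log _, ?_⟩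
  rw [expAt, exp_cfc_log hR, mul_assoc, mul_assoc, mul_assoc, ← conjTranspose_mul,
    Matrix.mul_nonsing_inv _ hdet, conjTranspose_one, mul_one,
    Matrix.mul_nonsing_inv_cancel_left _ _ hdet]

end ExpAt

section LogVec

variable {n : Type*} [Fintype n] [DecidableEq n] {H U : Matrix n n ℂ}

/-- The matrix logarithm as a map into Euclidean space: the chart in which the Riemannian metric is
compared with a flat one. -/
noncomputable def logVec (P : Matrix n n ℂ) : EuclideanSpace ℂ (n × n) :=
  frobeniusVec (cfc Real.log P)

lemma logVec_exp (hH : H.IsHermitian) : logVec (NormedSpace.exp H) = frobeniusVec H := by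
  rw [logVec, cfc_log_exp hH]

lemma norm_frobeniusVec_conj (hU : U ∈ Matrix.unitaryGroup n ℂ) (X : Matrix n n ℂ) :
    ‖frobeniusVec (U * X * Uᴴ)‖ = ‖frobeniusVec X‖ := by
  have hUU : Uᴴ * U = 1 := Matrix.mem_unitaryGroup_iff'.1 hU
  rw [← sq_eq_sq₀ (norm_nonneg _) (norm_nonneg _), norm_frobeniusVec_sq, norm_frobeniusVec_sq]
  congr 1
  calc ((U * X * Uᴴ)ᴴ * (U * X * Uᴴ)).trace = (U * (Xᴴ * (Uᴴ * U) * X) * Uᴴ).trace := by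
        simp only [conjTranspose_mul, conjTranspose_conjTranspose, mul_assoc]
    _ = (Xᴴ * X).trace := by
        rw [Matrix.trace_mul_cycle, hUU, one_mul, mul_one]

lemma norm_logVec_expAt_of_mem_unitaryGroup (hU : U ∈ Matrix.unitaryGroup n ℂ)
    (hH : H.IsHermitian) : ‖logVec (expAt U H)‖ = ‖frobeniusVec H‖ := by
  rw [expAt_of_mem_unitaryGroup hU, logVec_exp (isHermitian_mul_mul_conjTranspose U hH),
    norm_frobeniusVec_conj hU]

end LogVec

section RiemannianDistance

variable {m : ℕ} {B C H K P Q : Matrix (Fin m) (Fin m) ℂ}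

lemma matFun_eq_cfc (f : ℝ → ℝ) (A : Matrix (Fin m) (Fin m) ℂ) : matFun f A = cfc f A := by
  rw [matFun]
  split_ifs with hA
  · exact (hA.cfc_eq f).symm
  · exact (cfc_apply_of_not_predicate A hA).symm

lemma rdist_eq_norm_logVec (P Q : Matrix (Fin m) (Fin m) ℂ) :
    rdist P Q = ‖logVec ((msqrt P)⁻¹ * Q * (msqrt P)⁻¹)‖ := by
  rw [rdist, fnorm_eq_norm_frobeniusVec, mlog, matFun_eq_cfc, logVec]

lemma isHermitian_msqrt (P : Matrix (Fin m) (Fin m) ℂ) : (msqrt P).IsHermitian := by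
  rw [msqrt, matFun_eq_cfc]
  exact cfc_predicate Real.sqrt P

lemma msqrt_mul_self (hP : P.PosSemidef) : msqrt P * msqrt P = P := by
  rw [msqrt, matFun_eq_cfc, cfc_sqrt_mul_self hP]

lemma isUnit_msqrt (hP : P.PosDef) : IsUnit (msqrt P) :=
  isUnit_of_mul_isUnit_left ((msqrt_mul_self hP.posSemidef).symm ▸ hP.isUnit)

lemma inv_msqrt_mul_mem_unitaryGroup (hC : IsUnit C) :
    (msqrt (C * Cᴴ))⁻¹ * C ∈ Matrix.unitaryGroup (Fin m) ℂ := by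
  have hP : (C * Cᴴ).PosDef := expAt_zero C ▸ posDef_expAt hC Matrix.isHermitian_zero
  set S := msqrt (C * Cᴴ)
  have hSdet : IsUnit S.det := (Matrix.isUnit_iff_isUnit_det _).1 (isUnit_msqrt hP)
  rw [Matrix.mem_unitaryGroup_iff, star_eq_conjTranspose, conjTranspose_mul,
    conjTranspose_nonsing_inv, (isHermitian_msqrt _).eq]
  calc S⁻¹ * C * (Cᴴ * S⁻¹) = S⁻¹ * (C * Cᴴ) * S⁻¹ := by simp only [mul_assoc]
    _ = S⁻¹ * S * (S * S⁻¹) := by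
        rw [← msqrt_mul_self hP.posSemidef]
        simp only [mul_assoc]
        rfl
    _ = 1 := by rw [Matrix.nonsing_inv_mul _ hSdet, Matrix.mul_nonsing_inv _ hSdet, one_mul]

lemma rdist_expAt_zero_left (hC : IsUnit C) (hH : H.IsHermitian) :
    rdist (expAt C 0) (expAt C H) = ‖frobeniusVec H‖ := by
  rw [rdist_eq_norm_logVec, ← norm_logVec_expAt_of_mem_unitaryGroup
    (inv_msqrt_mul_mem_unitaryGroup hC) hH, expAt_zero, expAt_mul, conjTranspose_nonsing_inv,
    (isHermitian_msqrt _).eq]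

lemma rdist_expAt_smul_expAt_smul (hC : IsUnit C) (hH : H.IsHermitian) (s t : ℝ) :
    rdist (expAt C (s • H)) (expAt C (t • H)) = |t - s| * ‖frobeniusVec H‖ := by
  have hD : IsUnit (C * NormedSpace.exp ((s / 2) • H)) := hC.mul (Matrix.isUnit_exp _)
  have h := rdist_expAt_zero_left hD (hH.smul (IsSelfAdjoint.all (t - s)))
  rw [← zero_smul ℝ H, expAt_mul_exp_smul C hH, expAt_mul_exp_smul C hH,
    mul_div_cancel₀ s two_ne_zero, add_zero, add_sub_cancel] at h
  rw [h, frobeniusVec_real_smul, norm_smul, Real.norm_eq_abs]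

lemma exists_expAt_eq_and_expAt_eq (hP : P.PosDef) (hQ : Q.PosDef) :
    ∃ C H : Matrix (Fin m) (Fin m) ℂ,
      IsUnit C ∧ H.IsHermitian ∧ expAt C 0 = P ∧ expAt C H = Q := by
  obtain ⟨C, hC, hCP⟩ := exists_isUnit_mul_conjTranspose_eq hP
  obtain ⟨H, hH, hHQ⟩ := exists_expAt_eq hC hQ
  exact ⟨C, H, hC, hH, (expAt_zero C).trans hCP, hHQ⟩

lemma rdist_self (hP : P.PosDef) : rdist P P = 0 := by
  obtain ⟨C, -, hC, -, rfl, -⟩ := exists_expAt_eq_and_expAt_eq hP hP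
  rw [rdist_expAt_zero_left hC Matrix.isHermitian_zero, map_zero, norm_zero]

lemma eq_of_rdist_eq_zero (hP : P.PosDef) (hQ : Q.PosDef) (hPQ : rdist P Q = 0) : P = Q := by
  obtain ⟨C, H, hC, hH, rfl, rfl⟩ := exists_expAt_eq_and_expAt_eq hP hQ
  rw [rdist_expAt_zero_left hC hH, norm_eq_zero, map_eq_zero_iff _ frobeniusVec.injective] at hPQ
  rw [hPQ]

lemma rdist_comm (hP : P.PosDef) (hQ : Q.PosDef) : rdist P Q = rdist Q P := by
  obtain ⟨C, H, hC, hH, rfl, rfl⟩ := exists_expAt_eq_and_expAt_eq hP hQ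
  have h := rdist_expAt_smul_expAt_smul hC hH
  simpa using (h 0 1).trans ((h 1 0).trans (by rw [abs_sub_comm])).symm

lemma rdist_congr (hB : IsUnit B) (hP : P.PosDef) (hQ : Q.PosDef) :
    rdist (B * P * Bᴴ) (B * Q * Bᴴ) = rdist P Q := by
  obtain ⟨C, H, hC, hH, rfl, rfl⟩ := exists_expAt_eq_and_expAt_eq hP hQ
  rw [← expAt_mul, ← expAt_mul, rdist_expAt_zero_left (hB.mul hC) hH, rdist_expAt_zero_left hC hH]

lemma rdist_sq_le_jeffreysDiv (hP : P.PosDef) (hQ : Q.PosDef) :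
    rdist P Q ^ 2 ≤ jeffreysDiv P Q := by
  obtain ⟨C, H, hC, hH, rfl, rfl⟩ := exists_expAt_eq_and_expAt_eq hP hQ
  rw [rdist_expAt_zero_left hC hH, expAt, expAt, jeffreysDiv_congr hC]
  simpa using sq_dist_frobeniusVec_le_jeffreysDiv Matrix.isHermitian_zero hH

lemma jeffreysDiv_le_rdist_sq_mul_exp (hP : P.PosDef) (hQ : Q.PosDef) :
    jeffreysDiv P Q ≤ rdist P Q ^ 2 * Real.exp (rdist P Q ^ 2 / 2) := by
  obtain ⟨C, H, hC, hH, rfl, rfl⟩ := exists_expAt_eq_and_expAt_eq hP hQ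
  rw [rdist_expAt_zero_left hC hH, expAt, expAt, jeffreysDiv_congr hC, NormedSpace.exp_zero]
  exact jeffreysDiv_one_exp_le hH

lemma dist_logVec_le_rdist_mul_exp (hP : P.PosDef) (hQ : Q.PosDef) :
    dist (logVec P) (logVec Q) ≤ rdist P Q * Real.exp (rdist P Q ^ 2 / 4) := by
  have hdist : dist (logVec P) (logVec Q) ^ 2 ≤ jeffreysDiv P Q := by
    have h := sq_dist_frobeniusVec_le_jeffreysDiv (isHermitian_cfc_log P) (isHermitian_cfc_log Q)
    rwa [exp_cfc_log hP, exp_cfc_log hQ] at h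
  have hδ : 0 ≤ rdist P Q := Real.sqrt_nonneg _
  refine le_of_sq_le_sq ?_ (mul_nonneg hδ (Real.exp_pos _).le)
  calc dist (logVec P) (logVec Q) ^ 2 ≤ rdist P Q ^ 2 * Real.exp (rdist P Q ^ 2 / 2) :=
        hdist.trans (jeffreysDiv_le_rdist_sq_mul_exp hP hQ)
    _ = (rdist P Q * Real.exp (rdist P Q ^ 2 / 4)) ^ 2 := by
        rw [mul_pow, ← Real.exp_nat_mul]
        ring_nf

theorem dist_logVec_le_rdist (hP : P.PosDef) (hQ : Q.PosDef) :
    dist (logVec P) (logVec Q) ≤ rdist P Q := by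
  obtain ⟨C, H, hC, hH, rfl, rfl⟩ := exists_expAt_eq_and_expAt_eq hP hQ
  set r := ‖frobeniusVec H‖
  have hcont : ContinuousAt (fun h : ℝ => r * Real.exp ((|h| * r) ^ 2 / 4)) 0 := by fun_prop
  have hspeed (s t : ℝ) : dist (logVec (expAt C (s • H))) (logVec (expAt C (t • H))) ≤
      |t - s| * (r * Real.exp ((|t - s| * r) ^ 2 / 4)) := by
    refine (dist_logVec_le_rdist_mul_exp (posDef_expAt hC ?_) (posDef_expAt hC ?_)).trans_eq ?_
    · exact hH.smul (IsSelfAdjoint.all s)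
    · exact hH.smul (IsSelfAdjoint.all t)
    · rw [rdist_expAt_smul_expAt_smul hC hH, mul_assoc]
  rw [rdist_expAt_zero_left hC hH]
  simpa using dist_le_abs_sub_mul_of_continuousAt hcont hspeed 0 1

lemma dist_frobeniusVec_le_rdist_expAt (hC : IsUnit C) (hH : H.IsHermitian)
    (hK : K.IsHermitian) :
    dist (frobeniusVec H) (frobeniusVec K) ≤ rdist (expAt C H) (expAt C K) := by
  have h := dist_logVec_le_rdist (posDef_exp hH) (posDef_exp hK)
  rwa [logVec_exp hH, logVec_exp hK, ← rdist_congr hC (posDef_exp hH) (posDef_exp hK)] at h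

lemma rdist_triangle {R : Matrix (Fin m) (Fin m) ℂ} (hP : P.PosDef) (hQ : Q.PosDef)
    (hR : R.PosDef) : rdist P R ≤ rdist P Q + rdist Q R := by
  obtain ⟨C, H, hC, hH, rfl, rfl⟩ := exists_expAt_eq_and_expAt_eq hP hQ
  obtain ⟨K, hK, rfl⟩ := exists_expAt_eq hC hR
  rw [rdist_expAt_zero_left hC hH, rdist_expAt_zero_left hC hK]
  refine (norm_le_norm_add_norm_sub' (frobeniusVec K) (frobeniusVec H)).trans ?_
  rw [← dist_eq_norm, dist_comm]
  gcongr
  exact dist_frobeniusVec_le_rdist_expAt hC hH hK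

lemma exists_expAt_neg_eq_and_expAt_eq (hP : P.PosDef) (hQ : Q.PosDef) :
    ∃ C H : Matrix (Fin m) (Fin m) ℂ,
      IsUnit C ∧ H.IsHermitian ∧ expAt C (-H) = P ∧ expAt C H = Q := by
  obtain ⟨C, H, hC, hH, rfl, rfl⟩ := exists_expAt_eq_and_expAt_eq hP hQ
  refine ⟨C * NormedSpace.exp ((1 / 4 : ℝ) • H), (1 / 2 : ℝ) • H,
    hC.mul (Matrix.isUnit_exp _), hH.smul (IsSelfAdjoint.all _), ?_, ?_⟩
  · rw [← neg_smul, expAt_mul_exp_smul C hH]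
    norm_num
  · rw [expAt_mul_exp_smul C hH]
    norm_num

theorem exists_midpoint_rdist (hP : P.PosDef) (hQ : Q.PosDef) :
    ∃ Z : Matrix (Fin m) (Fin m) ℂ, Z.PosDef ∧ ∀ A : Matrix (Fin m) (Fin m) ℂ, A.PosDef →
      rdist Z A ^ 2 ≤ (rdist P A ^ 2 + rdist Q A ^ 2) / 2 - rdist P Q ^ 2 / 4 := by
  obtain ⟨C, H, hC, hH, rfl, rfl⟩ := exists_expAt_neg_eq_and_expAt_eq hP hQ
  refine ⟨expAt C 0, posDef_expAt hC Matrix.isHermitian_zero, fun A hA => ?_⟩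
  obtain ⟨K, hK, rfl⟩ := exists_expAt_eq hC hA
  have hPQ : rdist (expAt C (-H)) (expAt C H) = 2 * ‖frobeniusVec H‖ := by
    have h := rdist_expAt_smul_expAt_smul hC hH (-1) 1
    rwa [neg_smul, one_smul, sub_neg_eq_add, one_add_one_eq_two, abs_two] at h
  have hPA := pow_le_pow_left₀ dist_nonneg (dist_frobeniusVec_le_rdist_expAt hC hH.neg hK) 2
  have hQA := pow_le_pow_left₀ dist_nonneg (dist_frobeniusVec_le_rdist_expAt hC hH hK) 2
  rw [map_neg, dist_eq_norm, ← neg_add', norm_neg] at hPA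
  rw [dist_eq_norm] at hQA
  rw [rdist_expAt_zero_left hC hK, hPQ]
  linarith [parallelogram_law_with_norm ℂ (frobeniusVec H) (frobeniusVec K)]

end RiemannianDistance

section PosDefCone

open Filter Topology

variable {m : ℕ}

/-- The cone of positive definite matrices as a type of its own, carrying the Riemannian metric
`rdist` as its distance. -/
def PosDefCone (m : ℕ) : Type :=
  {P : Matrix (Fin m) (Fin m) ℂ // P.PosDef}

noncomputable instance : MetricSpace (PosDefCone m) where
  dist P Q := rdist P.1 Q.1
  dist_self P := rdist_self P.2
  dist_comm P Q := rdist_comm P.2 Q.2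
  dist_triangle P Q R := rdist_triangle P.2 Q.2 R.2
  eq_of_dist_eq_zero h := Subtype.ext (eq_of_rdist_eq_zero (Subtype.prop _) (Subtype.prop _) h)

theorem PosDefCone.semiparallelogramLaw (m : ℕ) : SemiparallelogramLaw (PosDefCone m) := by
  intro P Q
  obtain ⟨Z, hZ, hZA⟩ := exists_midpoint_rdist P.2 Q.2
  exact ⟨⟨Z, hZ⟩, fun A => hZA A.1 A.2⟩

lemma tendsto_rdist_exp {α : Type*} {l : Filter α} {H : α → Matrix (Fin m) (Fin m) ℂ}
    {L : Matrix (Fin m) (Fin m) ℂ} (hH : ∀ a, (H a).IsHermitian) (hL : L.IsHermitian)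
    (hHL : Tendsto H l (𝓝 L)) :
    Tendsto (fun a => rdist (NormedSpace.exp (H a)) (NormedSpace.exp L)) l (𝓝 0) := by
  have hjeffreys := ((continuous_jeffreysDiv_exp_left L).tendsto L).comp hHL
  rw [jeffreysDiv_self (Matrix.isUnit_exp L)] at hjeffreys
  refine squeeze_zero (fun a => Real.sqrt_nonneg _) (fun a => Real.le_sqrt_of_sq_le
    (rdist_sq_le_jeffreysDiv (posDef_exp (hH a)) (posDef_exp hL))) ?_
  simpa using hjeffreys.sqrt

lemma PosDefCone.lipschitzWith_logVec : LipschitzWith 1 fun P : PosDefCone m => logVec P.1 :=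
  LipschitzWith.mk_one fun P Q => dist_logVec_le_rdist P.2 Q.2

instance : CompleteSpace (PosDefCone m) := by
  refine Metric.complete_of_cauchySeq_tendsto fun u hu => ?_
  obtain ⟨v, hv⟩ := cauchySeq_tendsto_of_complete
    (PosDefCone.lipschitzWith_logVec.uniformContinuous.comp_cauchySeq hu)
  have hlog : Tendsto (fun k => cfc Real.log (u k).1) atTop (𝓝 (frobeniusVec.symm v)) := by
    have hcont : Continuous (frobeniusVec (n := Fin m)).symm :=
      frobeniusVec.symm.toLinearMap.continuous_of_finiteDimensional
    simpa [logVec, Function.comp_def] using (hcont.tendsto v).comp hv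
  have hL : (frobeniusVec.symm v).IsHermitian :=
    (isClosed_eq (by fun_prop) continuous_id).mem_of_tendsto hlog
      (Eventually.of_forall fun k => isHermitian_cfc_log (u k).1)
  refine ⟨⟨_, posDef_exp hL⟩, tendsto_iff_dist_tendsto_zero.2 ?_⟩
  refine (tendsto_rdist_exp (fun k => isHermitian_cfc_log (u k).1) hL hlog).congr fun k => ?_
  rw [exp_cfc_log (u k).2]
  rfl

end PosDefCone

/-- Existence and uniqueness of the weighted least squares mean: the function
`F(X) = Σᵢ wᵢ δ²(X, Aᵢ)` attains its minimum over the positive definite matrices at exactly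
one point. -/
theorem least_squares_mean_exists_unique {m n : ℕ} (A : Fin n → Matrix (Fin m) (Fin m) ℂ)
    (hA : ∀ i, (A i).PosDef) (w : Fin n → ℝ) (hw : ∀ i, 0 < w i) (hw1 : ∑ i, w i = 1) :
    ∃! X : Matrix (Fin m) (Fin m) ℂ, X.PosDef ∧
      ∀ Y : Matrix (Fin m) (Fin m) ℂ, Y.PosDef →
        ∑ i, w i * rdist X (A i) ^ 2 ≤ ∑ i, w i * rdist Y (A i) ^ 2 := by
  obtain ⟨X, hX, huniq⟩ := (PosDefCone.semiparallelogramLaw m).existsUnique_forall_sum_sq_dist_le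
    (fun i => ⟨A i, hA i⟩) (fun i => (hw i).le) (hw1.symm ▸ zero_lt_one)
  exact ⟨X.1, ⟨X.2, fun Y hY => hX ⟨Y, hY⟩⟩,
    fun Y hY => congrArg Subtype.val (huniq ⟨Y, hY.1⟩ fun Z => hY.2 Z.1 Z.2)⟩
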